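/- Let K be a field with algebraic closure K̄, let > be a semigroup order on the monomials in x₁,…,xₙ, let S ⊆ A := K[x₁,…,xₙ] and S̄ ⊆ Ā := K̄[x₁,…,xₙ] be the multiplicative sets {1+g : g = 0 or lt(g) < 1} of the respective rings, and for an ideal I ⊆ A let Ī denote the ideal of Ā generated by the image of I under the inclusion A → Ā. Then the preimage in A (under the inclusion A → Ā) of the contraction (S̄⁻¹Ī)^c equals (S⁻¹I)^c. -/

import Mathlib

open scoped Classical

noncomputable section

/-- A semigroup order on monomials: a strict total order on exponent vectors (written
additively; the monomial `1` corresponds to `0`) compatible with multiplication. -/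
def IsSemigroupOrder {σ : Type*} (lt : (σ →₀ ℕ) → (σ →₀ ℕ) → Prop) : Prop :=
  IsStrictTotalOrder (σ →₀ ℕ) lt ∧ ∀ a b c : σ →₀ ℕ, lt a b → lt (c + a) (c + b)

/-- The variable `i` is local for the order `lt`, i.e. `x_i < 1`. -/
def IsLocalVar {σ : Type*} (lt : (σ →₀ ℕ) → (σ →₀ ℕ) → Prop) (i : σ) : Prop :=
  lt (Finsupp.single i 1) 0

/-- A control order: a semigroup order under which every monomial divisible by a local
variable is `< 1`. -/
def IsControlOrder {σ : Type*} (lt : (σ →₀ ℕ) → (σ →₀ ℕ) → Prop) : Prop :=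
  IsSemigroupOrder lt ∧ ∀ m : σ →₀ ℕ, (∃ i, IsLocalVar lt i ∧ m i ≠ 0) → lt m 0

/-- `m` is the leading monomial of `g` w.r.t. `lt`. -/
def IsLeadingMonomial {K : Type*} [CommSemiring K] {σ : Type*}
    (lt : (σ →₀ ℕ) → (σ →₀ ℕ) → Prop) (g : MvPolynomial σ K) (m : σ →₀ ℕ) : Prop :=
  m ∈ g.support ∧ ∀ m' ∈ g.support, m' ≠ m → lt m' m

/-- The multiplicative set `S = {1 + g : g = 0 or lt(g) < 1}`. -/
def SDen (K : Type*) [CommSemiring K] {σ : Type*}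
    (lt : (σ →₀ ℕ) → (σ →₀ ℕ) → Prop) : Set (MvPolynomial σ K) :=
  {f | ∃ g : MvPolynomial σ K, f = 1 + g ∧
    (g = 0 ∨ ∃ m, IsLeadingMonomial lt g m ∧ lt m 0)}

/-- `I = ⋂ i ∈ s, Q i` is a minimal primary decomposition: every `Q i` is primary, the
radicals are pairwise distinct, and no component contains the intersection of the others. -/
def MinPrimDecOn {R : Type*} [CommRing R] {ι : Type*} (I : Ideal R) (Q : ι → Ideal R)
    (s : Finset ι) : Prop :=
  I = ⨅ i ∈ s, Q i ∧ (∀ i ∈ s, (Q i).IsPrimary) ∧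
    (∀ i ∈ s, ∀ j ∈ s, (Q i).radical = (Q j).radical → i = j) ∧
    ∀ i ∈ s, ¬ (⨅ j ∈ s.erase i, Q j) ≤ Q i

/-- The extraction determined by the decomposition `Q` (over `s`) and the ideal `J`:
the intersection of those components `Q i` with `Q i + J ≠ A` (which is `⊤` = the whole
ring when there are no such components). -/
def extractionFrom {R : Type*} [CommRing R] {ι : Type*} (J : Ideal R) (Q : ι → Ideal R)
    (s : Finset ι) : Ideal R :=
  ⨅ i ∈ s.filter (fun i => Q i ⊔ J ≠ ⊤), Q i

/-- `B` is the extraction `β(I,J)` of `I` by `J`. -/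
def IsExtraction {R : Type*} [CommRing R] (I J B : Ideal R) : Prop :=
  ∃ (k : ℕ) (Q : Fin k → Ideal R), MinPrimDecOn I Q Finset.univ ∧
    B = extractionFrom J Q Finset.univ

/-- `t ⊆ s` determines an isolated set of primes of the decomposition `Q` over `s`. -/
def IsIsolatedOn {R : Type*} [CommRing R] {ι : Type*} (Q : ι → Ideal R)
    (s t : Finset ι) : Prop :=
  t ⊆ s ∧ ∀ j ∈ s, (∃ i ∈ t, (Q j).radical ≤ (Q i).radical) → j ∈ t

/-- The lifted ideal `W' = ⟨W, t₁ - g₁, …, t_s - g_s⟩ ⊆ A' = K[x₁,…,xₙ,t₁,…,t_s]`. -/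
def liftIdeal {K : Type*} [CommRing K] {n s : ℕ} (g : Fin s → MvPolynomial (Fin n) K)
    (W : Ideal (MvPolynomial (Fin n) K)) : Ideal (MvPolynomial (Fin n ⊕ Fin s) K) :=
  W.map (MvPolynomial.rename (Sum.inl : Fin n → Fin n ⊕ Fin s)).toRingHom ⊔
    Ideal.span (Set.range fun w : Fin s =>
      (MvPolynomial.X (Sum.inr w) : MvPolynomial (Fin n ⊕ Fin s) K) -
        MvPolynomial.rename (Sum.inl : Fin n → Fin n ⊕ Fin s) (g w))

/-- The substitution homomorphism `φ : A' → A`, fixing each `x_i` and sending `t_w ↦ g_w`. -/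
def substHom {K : Type*} [CommRing K] {n s : ℕ} (g : Fin s → MvPolynomial (Fin n) K) :
    MvPolynomial (Fin n ⊕ Fin s) K →ₐ[K] MvPolynomial (Fin n) K :=
  MvPolynomial.aeval (Sum.elim MvPolynomial.X g)

theorem aux_max {α : Type*} (lt : α → α → Prop) (h : IsStrictTotalOrder α lt) (s : Finset α)
    (hs : s.Nonempty) : ∃ m ∈ s, ∀ m' ∈ s, m' ≠ m → lt m' m := by
  induction hs using Finset.Nonempty.cons_induction with
  | singleton a => exact ⟨a, by simp, by simp⟩
  | cons a s ha hs ih =>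
    obtain ⟨m, hm, hmax⟩ := ih
    by_cases hlt : lt m a
    · refine ⟨a, by simp, fun m' hm' hne => ?_⟩
      rcases Finset.mem_cons.1 hm' with h1 | h1
      · exact absurd h1 hne
      · by_cases h2 : m' = m
        · exact h2 ▸ hlt
        · exact _root_.trans (hmax m' h1 h2) hlt
    · refine ⟨m, by simp [hm], fun m' hm' hne => ?_⟩
      rcases Finset.mem_cons.1 hm' with h1 | h1
      · subst h1
        rcases trichotomous_of lt m' m with h3 | h3 | h3
        · exact h3
        · exact absurd h3 hne
        · exact absurd h3 hlt
      · exact hmax m' h1 hne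

theorem aux_mem {K : Type*} [CommRing K] {σ : Type*} (lt : (σ →₀ ℕ) → (σ →₀ ℕ) → Prop)
    (h : IsSemigroupOrder lt) (f : MvPolynomial σ K) :
    f ∈ SDen K lt ↔ ∀ m, MvPolynomial.coeff m (f - 1) ≠ 0 → lt m 0 := by
  have := h.1
  constructor
  · rintro ⟨g, rfl, hg⟩ m hm
    rw [add_sub_cancel_left] at hm
    rcases hg with rfl | ⟨m₀, ⟨_, h2⟩, h3⟩
    · simp at hm
    · by_cases e : m = m₀
      · exact e ▸ h3
      · exact _root_.trans (h2 m (MvPolynomial.mem_support_iff.2 hm) e) h3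
  · intro H
    refine ⟨f - 1, by ring, ?_⟩
    by_cases h0 : f - 1 = 0
    · exact Or.inl h0
    · right
      obtain ⟨m, hm, hmax⟩ := aux_max lt h.1 (f - 1).support
        (by rwa [Finset.nonempty_iff_ne_empty, Ne, MvPolynomial.support_eq_empty])
      exact ⟨m, ⟨hm, hmax⟩, H m (MvPolynomial.mem_support_iff.1 hm)⟩

def auxPhi {K L σ : Type*} [Field K] [Field L] [Algebra K L] (φ : L →ₗ[K] K)
    (p : MvPolynomial σ L) : MvPolynomial σ K :=
  ∑ m ∈ p.support, MvPolynomial.monomial m (φ (p.coeff m))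

theorem aux_coeff {K L σ : Type*} [Field K] [Field L] [Algebra K L] (φ : L →ₗ[K] K)
    (p : MvPolynomial σ L) (m : σ →₀ ℕ) : (auxPhi φ p).coeff m = φ (p.coeff m) := by
  simp only [auxPhi, MvPolynomial.coeff_sum, MvPolynomial.coeff_monomial]
  rw [Finset.sum_ite_eq']
  split_ifs with h
  · rfl
  · rw [MvPolynomial.notMem_support_iff.1 h, map_zero]

theorem aux_add {K L σ : Type*} [Field K] [Field L] [Algebra K L] (φ : L →ₗ[K] K)
    (p q : MvPolynomial σ L) : auxPhi φ (p + q) = auxPhi φ p + auxPhi φ q := by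
  ext m; simp [aux_coeff]

theorem aux_mul {K L σ : Type*} [Field K] [Field L] [Algebra K L] (φ : L →ₗ[K] K)
    (p : MvPolynomial σ L) (q : MvPolynomial σ K) :
    auxPhi φ (p * MvPolynomial.map (algebraMap K L) q) = auxPhi φ p * q := by
  ext m
  simp only [aux_coeff, MvPolynomial.coeff_mul, map_sum, MvPolynomial.coeff_map]
  refine Finset.sum_congr rfl fun x _ => ?_
  rw [mul_comm, ← Algebra.smul_def, map_smul, smul_eq_mul, mul_comm]

theorem aux_ideal {K L σ : Type*} [Field K] [Field L] [Algebra K L] (φ : L →ₗ[K] K)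
    (I : Ideal (MvPolynomial σ K)) (p : MvPolynomial σ L)
    (hp : p ∈ I.map (MvPolynomial.map (algebraMap K L))) : auxPhi φ p ∈ I := by
  refine Submodule.span_induction (p := fun x _ => ∀ c, auxPhi φ (c * x) ∈ I)
    ?_ ?_ ?_ ?_ hp 1 |> (by simpa using ·)
  · rintro _ ⟨a, ha, rfl⟩ c
    rw [aux_mul]; exact I.mul_mem_left _ ha
  · intro c; simp [auxPhi]
  · intro x y _ _ hx hy c
    rw [mul_add, aux_add]; exact I.add_mem (hx c) (hy c)
  · intro a x _ hx c
    rw [smul_eq_mul, ← mul_assoc]; exact hx _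

/-- for a semigroup order `lt` and an ideal `I ⊆ A = K[x]`, the preimage in
`A` of the contraction `(S̄⁻¹Ī)^c ⊆ Ā = K̄[x]` equals the contraction `(S⁻¹I)^c`. -/
theorem stmt_9 {K : Type*} [Field K] {n : ℕ}
    (lt : (Fin n →₀ ℕ) → (Fin n →₀ ℕ) → Prop) (hsem : IsSemigroupOrder lt)
    (S : Submonoid (MvPolynomial (Fin n) K))
    (hS : (S : Set (MvPolynomial (Fin n) K)) = SDen K lt)
    (Sb : Submonoid (MvPolynomial (Fin n) (AlgebraicClosure K)))
    (hSb : (Sb : Set (MvPolynomial (Fin n) (AlgebraicClosure K))) =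
      SDen (AlgebraicClosure K) lt)
    (I : Ideal (MvPolynomial (Fin n) K)) :
    Ideal.comap (MvPolynomial.map (algebraMap K (AlgebraicClosure K)))
        (((I.map (MvPolynomial.map (algebraMap K (AlgebraicClosure K)))).map
            (algebraMap (MvPolynomial (Fin n) (AlgebraicClosure K)) (Localization Sb))).comap
          (algebraMap (MvPolynomial (Fin n) (AlgebraicClosure K)) (Localization Sb))) =
      (I.map (algebraMap (MvPolynomial (Fin n) K) (Localization S))).comap
        (algebraMap (MvPolynomial (Fin n) K) (Localization S)) := by
  obtain ⟨φ, hφ⟩ := LinearMap.exists_leftInverse_of_injective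
    (Algebra.linearMap K (AlgebraicClosure K))
    (LinearMap.ker_eq_bot.2 (algebraMap K (AlgebraicClosure K)).injective)
  have hφ' : ∀ k, φ (algebraMap K (AlgebraicClosure K) k) = k := fun k =>
    LinearMap.congr_fun hφ k
  have hΦ : ∀ q : MvPolynomial (Fin n) K,
      auxPhi φ (MvPolynomial.map (algebraMap K (AlgebraicClosure K)) q) = q := by
    intro q; ext m; rw [aux_coeff, MvPolynomial.coeff_map, hφ']
  have memS : ∀ f, f ∈ S ↔ ∀ m, MvPolynomial.coeff m (f - 1) ≠ 0 → lt m 0 := fun f => by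
    rw [← aux_mem lt hsem, ← hS]; rfl
  have memSb : ∀ f, f ∈ Sb ↔ ∀ m, MvPolynomial.coeff m (f - 1) ≠ 0 → lt m 0 := fun f => by
    rw [← aux_mem lt hsem, ← hSb]; rfl
  ext f
  simp only [Ideal.mem_comap]
  rw [IsLocalization.algebraMap_mem_map_algebraMap_iff Sb,
    IsLocalization.algebraMap_mem_map_algebraMap_iff S]
  constructor
  · rintro ⟨s, hs, hsf⟩
    refine ⟨auxPhi φ s, ?_, ?_⟩
    · rw [memS]
      intro m hm
      refine (memSb s).1 hs m fun h0 => hm ?_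
      have e : s = (s - 1) + MvPolynomial.map (algebraMap K (AlgebraicClosure K)) 1 := by simp
      rw [e, aux_add, hΦ, add_sub_cancel_right, aux_coeff, h0, map_zero]
    · rw [← aux_mul]; exact aux_ideal φ I _ hsf
  · rintro ⟨s, hs, hsf⟩
    refine ⟨MvPolynomial.map (algebraMap K (AlgebraicClosure K)) s, ?_, ?_⟩
    · rw [memSb]
      intro m hm
      refine (memS s).1 hs m fun h0 => hm ?_
      rw [← map_one (MvPolynomial.map (algebraMap K (AlgebraicClosure K))), ← map_sub,
        MvPolynomial.coeff_map, h0, map_zero]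
    · rw [← map_mul]; exact Ideal.mem_map_of_mem _ hsf
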